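/- Let p be a prime, F = ℚ_p, and let 𝔞_c ⊆ 𝔰𝔩₂(ℚ_p) denote the line spanned by the matrix X_c with first row (0, c) and second row (1, 0), for c ∈ ℚ_p^×. Then every nonzero element of 𝔞_1 and every nonzero element of 𝔞_{p²} is diagonalizable over ℚ_p, yet there is no element h = diag(s, s⁻¹) of the diagonal torus H_F ⊆ SL₂(ℚ_p) with h⁻¹ 𝔞_1 h = 𝔞_{p²}. Hence 𝔞_1 and 𝔞_{p²} are two Cartan subspaces consisting of ℚ_p-split elements that are not conjugate under H_F. -/

import Mathlib

open Matrix

/-- The Cartan subspace `𝔞_c = {(0, ct; t, 0) : t ∈ F}`. -/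
def cartanLine (F : Type*) [Field F] (c : F) : Set (Matrix (Fin 2) (Fin 2) F) :=
  {X | ∃ t : F, X = !![0, c * t; t, 0]}

/-- A matrix is diagonalizable over `F` if some `P ∈ GL₂(F)` conjugates it to a
diagonal matrix. -/
def IsDiagonalizableMat (F : Type*) [Field F] (X : Matrix (Fin 2) (Fin 2) F) : Prop :=
  ∃ P : GL (Fin 2) F,
    (((P⁻¹ : GL (Fin 2) F) : Matrix (Fin 2) (Fin 2) F) * X *
      (P : Matrix (Fin 2) (Fin 2) F)).IsDiag

/-! Conjugation by `diag(s, s⁻¹)` carries `𝔞_c` onto `𝔞_{c / s⁴}`, so `c` matters modulo fourth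
powers, whereas `𝔞_c` is split as soon as `c` is a nonzero square (in characteristic not two).
In `ℚ_p` the valuation shows that `p²`, a square, is not a fourth power. -/

section Field

variable {F : Type*} [Field F]

theorem isDiagonalizableMat_of_mul_eq_mul_diagonal {X P : Matrix (Fin 2) (Fin 2) F}
    {v : Fin 2 → F} (hP : P.det ≠ 0) (h : X * P = P * diagonal v) : IsDiagonalizableMat F X := by
  refine ⟨GeneralLinearGroup.mkOfDetNeZero P hP, ?_⟩
  have hX : X * (GeneralLinearGroup.mkOfDetNeZero P hP : Matrix (Fin 2) (Fin 2) F) =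
      GeneralLinearGroup.mkOfDetNeZero P hP * diagonal v := h
  rw [Matrix.mul_assoc, hX, Units.inv_mul_cancel_left]
  exact isDiag_diagonal v

theorem isDiagonalizableMat_of_mem_cartanLine [NeZero (2 : F)] {c : F} (hc : IsSquare c)
    (hc₀ : c ≠ 0) {X : Matrix (Fin 2) (Fin 2) F} (hX : X ∈ cartanLine F c) :
    IsDiagonalizableMat F X := by
  obtain ⟨a, rfl⟩ := hc
  obtain ⟨t, rfl⟩ := hX
  have ha : a ≠ 0 := left_ne_zero_of_mul hc₀
  have hdet : !![a, -a; 1, 1].det = 2 * a := by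
    rw [det_fin_two_of]
    ring
  have heigen : !![0, a * a * t; t, 0] * !![a, -a; 1, 1] =
      !![a, -a; 1, 1] * diagonal ![a * t, -(a * t)] := by
    rw [diagonal_vec2, mul_fin_two, mul_fin_two]
    ring_nf
  exact isDiagonalizableMat_of_mul_eq_mul_diagonal (hdet ▸ mul_ne_zero two_ne_zero ha) heigen

theorem inv_diagonal_mul_fin_two_mul_diagonal {s : F} (hs : s ≠ 0) (a b c d : F) :
    (diagonal ![s, s⁻¹])⁻¹ * !![a, b; c, d] * diagonal ![s, s⁻¹] =
      !![a, b / s ^ 2; c * s ^ 2, d] := by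
  have hinv : (diagonal ![s, s⁻¹])⁻¹ = !![s⁻¹, 0; 0, s] :=
    inv_eq_left_inv (by simp [diagonal_vec2, one_fin_two, hs])
  rw [hinv, diagonal_vec2]
  simp only [mul_fin_two, mul_zero, zero_mul, add_zero, zero_add]
  field_simp

theorem image_conj_diagonal_cartanLine {s : F} (hs : s ≠ 0) (c : F) :
    (fun X => (diagonal ![s, s⁻¹])⁻¹ * X * diagonal ![s, s⁻¹]) '' cartanLine F c =
      cartanLine F (c / s ^ 4) := by
  have hconj (t : F) : (diagonal ![s, s⁻¹])⁻¹ * !![0, c * t; t, 0] * diagonal ![s, s⁻¹] =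
      !![0, c / s ^ 4 * (t * s ^ 2); t * s ^ 2, 0] := by
    rw [inv_diagonal_mul_fin_two_mul_diagonal hs]
    field_simp
  ext Y
  constructor
  · rintro ⟨_, ⟨t, rfl⟩, rfl⟩
    exact ⟨t * s ^ 2, hconj t⟩
  · rintro ⟨u, rfl⟩
    refine ⟨_, ⟨u / s ^ 2, rfl⟩, (hconj _).trans ?_⟩
    rw [div_mul_cancel₀ u (pow_ne_zero 2 hs)]

theorem cartanLine_injective : Function.Injective (cartanLine F) := by
  intro c d h
  obtain ⟨t, ht⟩ : !![0, c * 1; 1, 0] ∈ cartanLine F d := h ▸ ⟨1, rfl⟩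
  have h₀₁ : c * 1 = d * t := congrFun₂ ht 0 1
  have h₁₀ : 1 = t := congrFun₂ ht 1 0
  simpa [← h₁₀] using h₀₁

theorem cartanLines_split_not_conjugate_general [NeZero (2 : F)] {d : F} (hsq : IsSquare d)
    (hpow : ∀ x : F, x ^ 4 ≠ d) :
    (∀ X ∈ cartanLine F 1, IsDiagonalizableMat F X) ∧
    (∀ X ∈ cartanLine F d, IsDiagonalizableMat F X) ∧
    ¬ ∃ s : F, s ≠ 0 ∧
        (fun X => (diagonal ![s, s⁻¹])⁻¹ * X * diagonal ![s, s⁻¹]) '' cartanLine F 1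
          = cartanLine F d := by
  have hd : d ≠ 0 := fun h => hpow 0 (by rw [h, zero_pow four_ne_zero])
  refine ⟨fun X => isDiagonalizableMat_of_mem_cartanLine IsSquare.one one_ne_zero,
    fun X => isDiagonalizableMat_of_mem_cartanLine hsq hd, ?_⟩
  rintro ⟨s, hs, himage⟩
  rw [image_conj_diagonal_cartanLine hs] at himage
  refine hpow s⁻¹ ?_
  rw [inv_pow, ← one_div]
  exact cartanLine_injective himage

end Field

theorem dvd_of_padic_pow_eq_prime_pow {p : ℕ} [Fact p.Prime] {x : ℚ_[p]} {m n : ℕ}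
    (h : x ^ m = (p : ℚ_[p]) ^ n) : m ∣ n := by
  have hval : (m : ℤ) * x.valuation = n := by
    rw [← Padic.valuation_pow, h, Padic.valuation_pow, Padic.valuation_p, mul_one]
  exact Int.natCast_dvd_natCast.mp (Dvd.intro _ hval)

/-- Over `ℚ_p`, every nonzero element of `𝔞_1` and of `𝔞_{p²}` is
diagonalizable over `ℚ_p`, yet no element `diag(s, s⁻¹)` of the diagonal torus
`H_F ⊆ SL₂(ℚ_p)` conjugates `𝔞_1` onto `𝔞_{p²}`: these are two Cartan subspaces of
`ℚ_p`-split elements that are not `H_F`-conjugate. -/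
theorem cartanLines_split_not_conjugate (p : ℕ) [Fact p.Prime] :
    (∀ X ∈ cartanLine ℚ_[p] 1, X ≠ 0 → IsDiagonalizableMat ℚ_[p] X) ∧
    (∀ X ∈ cartanLine ℚ_[p] ((p : ℚ_[p]) ^ 2), X ≠ 0 → IsDiagonalizableMat ℚ_[p] X) ∧
    ¬ ∃ s : ℚ_[p], s ≠ 0 ∧
        (fun X => (diagonal ![s, s⁻¹])⁻¹ * X * diagonal ![s, s⁻¹]) '' cartanLine ℚ_[p] 1
          = cartanLine ℚ_[p] ((p : ℚ_[p]) ^ 2) := by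
  obtain ⟨hone, hsq, hconj⟩ := cartanLines_split_not_conjugate_general (IsSquare.sq (p : ℚ_[p]))
    fun x hx => absurd (dvd_of_padic_pow_eq_prime_pow hx) (by decide)
  exact ⟨fun X hX _ => hone X hX, fun X hX _ => hsq X hX, hconj⟩
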